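/- Let α ∈ ℝ and μ ∈ ℝ. Let u : ℝ² → ℝ be a smooth function of (t,x) with u(t,x) ≠ 0 at every point, set m = u − u_xx, and suppose that at every point m_t + ( α u_x/u³ ) m + ∂_x( ( α/u² ) m ) = 0. Then both of the following local conservation laws hold at every point: (i) ∂_t( u² + u_x² ) + ∂_x( 2α m/u − 2 u u_tx ) = 0 (H¹ density), and (ii) ∂_t( u_xx² + μ u_x² + (μ−1) u² ) + ∂_x[ 2(1−μ) u u_tx − 2 u_x u_t + α( m² + 2(μ−2) u m − (μ−2) u² )/u² ] = 0 (weighted H² / gradient-energy density); in particular, for μ = 2 the density u_xx² + 2u_x² + u² is locally equivalent to m², whose flux is α m²/u². -/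

import Mathlib

open Real

noncomputable section

/-- Partial derivative in the first (time) variable. -/
def pt (f : ℝ → ℝ → ℝ) (t x : ℝ) : ℝ := deriv (fun s => f s x) t

/-- Partial derivative in the second (space) variable. -/
def px (f : ℝ → ℝ → ℝ) (t x : ℝ) : ℝ := deriv (fun y => f t y) x

/-- The momentum variable `m = u - u_xx`. -/
def mf (u : ℝ → ℝ → ℝ) (t x : ℝ) : ℝ := u t x - px (px u) t x

/-!
After clearing the derivative of `α/u²`, the equation reads `u m_t = -α (m/u)_x`. Multiplying by
`2` gives the H¹ law, because `∂_t(u² + u_x²) = 2 u m_t + ∂_x(2 u u_tx)`; multiplying by `2m/u`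
gives `∂_t(m²) + ∂_x(α (m/u)²) = 0`. The weighted H² law is a combination of these two, since
`u_xx² + μ u_x² + (μ-1) u² = m² + (μ-2)(u² + u_x²) + 2 ∂_x(u u_x)` and the last term is the density
of the trivial law with flux `-2 ∂_t(u u_x)`.
-/

open Function Filter Topology

section PartialDerivatives

variable {f : ℝ → ℝ → ℝ} {t x : ℝ}

theorem hasDerivAt_fderiv_left (hf : DifferentiableAt ℝ (uncurry f) (t, x)) :
    HasDerivAt (fun s => f s x) (fderiv ℝ (uncurry f) (t, x) (1, 0)) t := by
  have h := hf.hasFDerivAt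
  exact h.comp_hasDerivAt t ((hasDerivAt_id t).prodMk (hasDerivAt_const t x))

theorem hasDerivAt_fderiv_right (hf : DifferentiableAt ℝ (uncurry f) (t, x)) :
    HasDerivAt (fun y => f t y) (fderiv ℝ (uncurry f) (t, x) (0, 1)) x := by
  have h := hf.hasFDerivAt
  exact h.comp_hasDerivAt x ((hasDerivAt_const x t).prodMk (hasDerivAt_id x))

theorem pt_eq_fderiv (hf : DifferentiableAt ℝ (uncurry f) (t, x)) :
    pt f t x = fderiv ℝ (uncurry f) (t, x) (1, 0) :=
  (hasDerivAt_fderiv_left hf).deriv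

theorem px_eq_fderiv (hf : DifferentiableAt ℝ (uncurry f) (t, x)) :
    px f t x = fderiv ℝ (uncurry f) (t, x) (0, 1) :=
  (hasDerivAt_fderiv_right hf).deriv

theorem hasDerivAt_pt (hf : DifferentiableAt ℝ (uncurry f) (t, x)) :
    HasDerivAt (fun s => f s x) (pt f t x) t :=
  (hasDerivAt_fderiv_left hf).differentiableAt.hasDerivAt

theorem hasDerivAt_px (hf : DifferentiableAt ℝ (uncurry f) (t, x)) :
    HasDerivAt (fun y => f t y) (px f t x) x :=
  (hasDerivAt_fderiv_right hf).differentiableAt.hasDerivAt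

theorem eventually_differentiableAt {p : ℝ × ℝ} (hf : ContDiffAt ℝ 1 (uncurry f) p) :
    ∀ᶠ q in 𝓝 p, DifferentiableAt ℝ (uncurry f) q :=
  (hf.eventually (by simp)).mono fun _ hq => hq.differentiableAt one_ne_zero

theorem uncurry_pt_eventuallyEq {p : ℝ × ℝ} (hf : ContDiffAt ℝ 1 (uncurry f) p) :
    uncurry (pt f) =ᶠ[𝓝 p] fun q => fderiv ℝ (uncurry f) q (1, 0) :=
  (eventually_differentiableAt hf).mono fun _ hq => pt_eq_fderiv hq

theorem uncurry_px_eventuallyEq {p : ℝ × ℝ} (hf : ContDiffAt ℝ 1 (uncurry f) p) :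
    uncurry (px f) =ᶠ[𝓝 p] fun q => fderiv ℝ (uncurry f) q (0, 1) :=
  (eventually_differentiableAt hf).mono fun _ hq => px_eq_fderiv hq

theorem contDiffAt_pt {m n : WithTop ℕ∞} {p : ℝ × ℝ} (hf : ContDiffAt ℝ n (uncurry f) p)
    (hmn : m + 1 ≤ n) : ContDiffAt ℝ m (uncurry (pt f)) p :=
  ((hf.fderiv_right hmn).clm_apply contDiffAt_const).congr_of_eventuallyEq
    (uncurry_pt_eventuallyEq (hf.of_le (le_add_self.trans hmn)))

theorem contDiffAt_px {m n : WithTop ℕ∞} {p : ℝ × ℝ} (hf : ContDiffAt ℝ n (uncurry f) p)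
    (hmn : m + 1 ≤ n) : ContDiffAt ℝ m (uncurry (px f)) p :=
  ((hf.fderiv_right hmn).clm_apply contDiffAt_const).congr_of_eventuallyEq
    (uncurry_px_eventuallyEq (hf.of_le (le_add_self.trans hmn)))

theorem px_pt_comm (hf : ContDiffAt ℝ 2 (uncurry f) (t, x)) :
    px (pt f) t x = pt (px f) t x := by
  have hf₁ : ContDiffAt ℝ 1 (uncurry f) (t, x) := hf.of_le one_le_two
  have hpt : DifferentiableAt ℝ (uncurry (pt f)) (t, x) :=
    (contDiffAt_pt hf one_add_one_eq_two.le).differentiableAt one_ne_zero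
  have hpx : DifferentiableAt ℝ (uncurry (px f)) (t, x) :=
    (contDiffAt_px hf one_add_one_eq_two.le).differentiableAt one_ne_zero
  have hf' : DifferentiableAt ℝ (fderiv ℝ (uncurry f)) (t, x) :=
    (hf.fderiv_right one_add_one_eq_two.le).differentiableAt one_ne_zero
  have fderiv_apply (v w : ℝ × ℝ) : fderiv ℝ (fun q => fderiv ℝ (uncurry f) q v) (t, x) w =
      fderiv ℝ (fderiv ℝ (uncurry f)) (t, x) w v := by
    simp [fderiv_clm_apply hf' (differentiableAt_const v)]
  calc px (pt f) t x
      = fderiv ℝ (fderiv ℝ (uncurry f)) (t, x) (0, 1) (1, 0) := by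
        rw [px_eq_fderiv hpt, (uncurry_pt_eventuallyEq hf₁).fderiv_eq, fderiv_apply]
    _ = fderiv ℝ (fderiv ℝ (uncurry f)) (t, x) (1, 0) (0, 1) :=
        (hf.isSymmSndFDerivAt (by simp)).eq _ _
    _ = pt (px f) t x := by
        rw [pt_eq_fderiv hpx, (uncurry_px_eventuallyEq hf₁).fderiv_eq, fderiv_apply]

end PartialDerivatives

/-- The local conservation law `T_t + Φ_x = 0` at the point `(t, x)`. Phrased with `HasDerivAt`, it
includes the existence of both derivatives, so that laws can be added. -/
def ConservationLawAt (T Φ : ℝ → ℝ → ℝ) (t x : ℝ) : Prop :=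
  ∃ τ, HasDerivAt (fun s => T s x) τ t ∧ HasDerivAt (fun y => Φ t y) (-τ) x

namespace ConservationLawAt

variable {T T' Φ Φ' : ℝ → ℝ → ℝ} {t x : ℝ}

theorem pt_add_px_eq_zero (h : ConservationLawAt T Φ t x) : pt T t x + px Φ t x = 0 := by
  obtain ⟨τ, hT, hΦ⟩ := h
  rw [pt, px, hT.deriv, hΦ.deriv, add_neg_cancel]

theorem add (h : ConservationLawAt T Φ t x) (h' : ConservationLawAt T' Φ' t x) :
    ConservationLawAt (fun s y => T s y + T' s y) (fun s y => Φ s y + Φ' s y) t x := by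
  obtain ⟨τ, hT, hΦ⟩ := h
  obtain ⟨τ', hT', hΦ'⟩ := h'
  exact ⟨τ + τ', hT.add hT', (hΦ.add hΦ').congr_deriv (neg_add τ τ').symm⟩

theorem const_mul (c : ℝ) (h : ConservationLawAt T Φ t x) :
    ConservationLawAt (fun s y => c * T s y) (fun s y => c * Φ s y) t x := by
  obtain ⟨τ, hT, hΦ⟩ := h
  exact ⟨c * τ, hT.const_mul c, (hΦ.const_mul c).congr_deriv (mul_neg c τ)⟩

theorem add_const_flux (c : ℝ) (h : ConservationLawAt T Φ t x) :
    ConservationLawAt T (fun s y => Φ s y + c) t x := by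
  obtain ⟨τ, hT, hΦ⟩ := h
  exact ⟨τ, hT, hΦ.add_const c⟩

theorem congr (h : ConservationLawAt T Φ t x) (hT : (fun s => T' s x) =ᶠ[𝓝 t] fun s => T s x)
    (hΦ : (fun y => Φ' t y) =ᶠ[𝓝 x] fun y => Φ t y) : ConservationLawAt T' Φ' t x := by
  obtain ⟨τ, h_T, h_Φ⟩ := h
  exact ⟨τ, h_T.congr_of_eventuallyEq hT, h_Φ.congr_of_eventuallyEq hΦ⟩

end ConservationLawAt

section Densities

variable {u : ℝ → ℝ → ℝ} {t x : ℝ}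

theorem contDiffAt_mf {m n : WithTop ℕ∞} {p : ℝ × ℝ} (hu : ContDiffAt ℝ n (uncurry u) p)
    (hmn : m + 1 + 1 ≤ n) : ContDiffAt ℝ m (uncurry (mf u)) p :=
  (hu.of_le ((le_self_add.trans le_self_add).trans hmn)).sub
    (contDiffAt_px (contDiffAt_px hu hmn) le_rfl)

theorem pt_mf (hu : ContDiffAt ℝ 3 (uncurry u) (t, x)) :
    pt (mf u) t x = pt u t x - pt (px (px u)) t x := by
  have huxx : ContDiffAt ℝ 1 (uncurry (px (px u))) (t, x) :=
    contDiffAt_px (contDiffAt_px hu two_add_one_eq_three.le) one_add_one_eq_two.le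
  exact ((hasDerivAt_pt (hu.differentiableAt (by simp))).sub
    (hasDerivAt_pt (huxx.differentiableAt one_ne_zero))).deriv

theorem conservationLawAt_H1 {ψ : ℝ → ℝ → ℝ} (hu : ContDiffAt ℝ 3 (uncurry u) (t, x))
    (hψ : HasDerivAt (fun y => ψ t y) (-(u t x * pt (mf u) t x)) x) :
    ConservationLawAt (fun s y => u s y ^ 2 + px u s y ^ 2)
      (fun s y => 2 * ψ s y - 2 * (u s y * pt (px u) s y)) t x := by
  have hux : ContDiffAt ℝ 2 (uncurry (px u)) (t, x) := contDiffAt_px hu two_add_one_eq_three.le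
  have huxt : ContDiffAt ℝ 1 (uncurry (pt (px u))) (t, x) :=
    contDiffAt_pt hux one_add_one_eq_two.le
  have du := hu.differentiableAt (by simp)
  have dux := hux.differentiableAt two_ne_zero
  have duxt := huxt.differentiableAt one_ne_zero
  refine ⟨_, ((hasDerivAt_pt du).fun_pow 2).add ((hasDerivAt_pt dux).fun_pow 2),
    ((hψ.const_mul 2).sub
      (((hasDerivAt_px du).mul (hasDerivAt_px duxt)).const_mul 2)).congr_deriv ?_⟩
  rw [pt_mf hu, px_pt_comm hux]
  ring

/-- The trivial law with density `∂_x(u u_x)` and flux `-∂_t(u u_x)`, both expanded. -/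
theorem conservationLawAt_px_mul_px (hu : ContDiffAt ℝ 3 (uncurry u) (t, x)) :
    ConservationLawAt (fun s y => px u s y ^ 2 + u s y * px (px u) s y)
      (fun s y => -(pt u s y * px u s y + u s y * pt (px u) s y)) t x := by
  have hux : ContDiffAt ℝ 2 (uncurry (px u)) (t, x) := contDiffAt_px hu two_add_one_eq_three.le
  have hut : ContDiffAt ℝ 2 (uncurry (pt u)) (t, x) := contDiffAt_pt hu two_add_one_eq_three.le
  have huxx : ContDiffAt ℝ 1 (uncurry (px (px u))) (t, x) :=
    contDiffAt_px hux one_add_one_eq_two.le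
  have huxt : ContDiffAt ℝ 1 (uncurry (pt (px u))) (t, x) :=
    contDiffAt_pt hux one_add_one_eq_two.le
  have du := hu.differentiableAt (by simp)
  have dux := hux.differentiableAt two_ne_zero
  have dut := hut.differentiableAt two_ne_zero
  have duxx := huxx.differentiableAt one_ne_zero
  have duxt := huxt.differentiableAt one_ne_zero
  refine ⟨_, ((hasDerivAt_pt dux).fun_pow 2).add ((hasDerivAt_pt du).mul (hasDerivAt_pt duxx)),
    (((hasDerivAt_px dut).mul (hasDerivAt_px dux)).add
      ((hasDerivAt_px du).mul (hasDerivAt_px duxt))).neg.congr_deriv ?_⟩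
  rw [px_pt_comm hux, px_pt_comm (hu.of_le (by norm_num))]
  ring

theorem ConservationLawAt.weighted_H2 {Φ Ψ : ℝ → ℝ → ℝ} (μ : ℝ)
    (hu : ContDiffAt ℝ 3 (uncurry u) (t, x))
    (hΦ : ConservationLawAt (fun s y => mf u s y ^ 2) Φ t x)
    (hΨ : ConservationLawAt (fun s y => u s y ^ 2 + px u s y ^ 2) Ψ t x) :
    ConservationLawAt
      (fun s y => px (px u) s y ^ 2 + μ * px u s y ^ 2 + (μ - 1) * u s y ^ 2)
      (fun s y => Φ s y + (μ - 2) * Ψ s y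
        + 2 * -(pt u s y * px u s y + u s y * pt (px u) s y)) t x :=
  ((hΦ.add (hΨ.const_mul (μ - 2))).add ((conservationLawAt_px_mul_px hu).const_mul 2)).congr
    (.of_forall fun s => by simp only [mf]; ring) .rfl

end Densities

section MultiPeakon

variable {α : ℝ} {u : ℝ → ℝ → ℝ} {t x : ℝ}

theorem hasDerivAt_mf_div (hu : ContDiffAt ℝ 3 (uncurry u) (t, x)) (hne : u t x ≠ 0) :
    HasDerivAt (fun y => mf u t y / u t y)
      ((px (mf u) t x * u t x - mf u t x * px u t x) / u t x ^ 2) x :=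
  have hm : ContDiffAt ℝ 1 (uncurry (mf u)) (t, x) := contDiffAt_mf hu (by norm_num)
  (hasDerivAt_px (hm.differentiableAt one_ne_zero)).div
    (hasDerivAt_px (hu.differentiableAt (by simp))) hne

theorem hasDerivAt_flux_of_multiPeakon (hu : ContDiffAt ℝ 3 (uncurry u) (t, x))
    (hne : u t x ≠ 0)
    (heq : pt (mf u) t x + (α * px u t x / u t x ^ 3) * mf u t x
      + px (fun s y => (α / u s y ^ 2) * mf u s y) t x = 0) :
    HasDerivAt (fun y => α * (mf u t y / u t y)) (-(u t x * pt (mf u) t x)) x := by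
  have hm : ContDiffAt ℝ 1 (uncurry (mf u)) (t, x) := contDiffAt_mf hu (by norm_num)
  have product_rule : px (fun s y => (α / u s y ^ 2) * mf u s y) t x =
      -(2 * α * px u t x / u t x ^ 3) * mf u t x + α / u t x ^ 2 * px (mf u) t x := by
    have hcoeff := (hasDerivAt_const x α).fun_div
      ((hasDerivAt_px (hu.differentiableAt (by simp))).fun_pow 2) (pow_ne_zero 2 hne)
    rw [px, (hcoeff.fun_mul (hasDerivAt_px (hm.differentiableAt one_ne_zero))).deriv]
    field_simp
    ring
  refine ((hasDerivAt_mf_div hu hne).const_mul α).congr_deriv ?_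
  rw [product_rule] at heq
  have evolution : pt (mf u) t x =
      α * px u t x / u t x ^ 3 * mf u t x - α / u t x ^ 2 * px (mf u) t x := by
    linear_combination heq
  rw [evolution]
  field_simp
  ring

theorem conservationLawAt_mf_sq (hu : ContDiffAt ℝ 3 (uncurry u) (t, x)) (hne : u t x ≠ 0)
    (hevolution : HasDerivAt (fun y => α * (mf u t y / u t y)) (-(u t x * pt (mf u) t x)) x) :
    ConservationLawAt (fun s y => mf u s y ^ 2)
      (fun s y => α * mf u s y ^ 2 / u s y ^ 2) t x := by
  have hm : ContDiffAt ℝ 1 (uncurry (mf u)) (t, x) := contDiffAt_mf hu (by norm_num)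
  obtain ⟨q, hq⟩ : ∃ q, HasDerivAt (fun y => mf u t y / u t y) q x :=
    ⟨_, hasDerivAt_mf_div hu hne⟩
  have hαq : α * q = -(u t x * pt (mf u) t x) := (hq.const_mul α).unique hevolution
  have hdensity : HasDerivAt (fun s => mf u s x ^ 2) (2 * mf u t x * pt (mf u) t x) t := by
    simpa using (hasDerivAt_pt (hm.differentiableAt one_ne_zero)).fun_pow 2
  have hflux : HasDerivAt (fun y => α * (mf u t y / u t y) ^ 2)
      (α * (2 * (mf u t x / u t x) * q)) x := by
    simpa using (hq.fun_pow 2).const_mul α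
  have flux_deriv : α * (2 * (mf u t x / u t x) * q) = -(2 * mf u t x * pt (mf u) t x) :=
    calc α * (2 * (mf u t x / u t x) * q)
        = 2 * (mf u t x / u t x) * (α * q) := by ring
      _ = 2 * (mf u t x / u t x) * -(u t x * pt (mf u) t x) := by rw [hαq]
      _ = -(2 * mf u t x * pt (mf u) t x) := by field_simp
  refine ⟨_, hdensity, ?_⟩
  simpa only [div_pow, mul_div_assoc] using hflux.congr_deriv flux_deriv

end MultiPeakon

theorem H1_and_weighted_H2_conservation_general (α μ : ℝ) {u : ℝ → ℝ → ℝ} {t x : ℝ}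
    (hu : ContDiffAt ℝ 3 (uncurry u) (t, x)) (hne : u t x ≠ 0)
    (heq : pt (mf u) t x + (α * px u t x / u t x ^ 3) * mf u t x
      + px (fun s y => (α / u s y ^ 2) * mf u s y) t x = 0) :
    ConservationLawAt (fun s y => u s y ^ 2 + px u s y ^ 2)
      (fun s y => 2 * α * mf u s y / u s y - 2 * u s y * pt (px u) s y) t x ∧
    ConservationLawAt
      (fun s y => px (px u) s y ^ 2 + μ * px u s y ^ 2 + (μ - 1) * u s y ^ 2)
      (fun s y => 2 * (1 - μ) * u s y * pt (px u) s y - 2 * px u s y * pt u s y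
        + α * (mf u s y ^ 2 + 2 * (μ - 2) * u s y * mf u s y - (μ - 2) * u s y ^ 2)
          / u s y ^ 2) t x ∧
    ConservationLawAt (fun s y => mf u s y ^ 2)
      (fun s y => α * mf u s y ^ 2 / u s y ^ 2) t x := by
  have hflux := hasDerivAt_flux_of_multiPeakon hu hne heq
  have h_H1 := conservationLawAt_H1 (ψ := fun s y => α * (mf u s y / u s y)) hu hflux
  have h_mf := conservationLawAt_mf_sq hu hne hflux
  have u_ne_zero : ∀ᶠ y in 𝓝 x, u t y ≠ 0 :=
    (hasDerivAt_px (hu.differentiableAt (by simp))).continuousAt.eventually_ne hne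
  refine ⟨h_H1.congr .rfl (.of_forall fun y => by ring), ?_, h_mf⟩
  -- The term `-α (μ-2) u²/u²` of the stated flux is constant.
  refine ((h_mf.weighted_H2 μ hu h_H1).add_const_flux (-(α * (μ - 2)))).congr .rfl ?_
  filter_upwards [u_ne_zero] with y hy
  field_simp
  ring

/-- H¹ and weighted H² (gradient-energy) conservation laws for the family
`m_t + (α u_x/u³) m + ∂_x((α/u²) m) = 0`; in particular for `μ = 2` the density is
locally equivalent to `m²` with flux `α m²/u²`. -/
theorem H1_and_weighted_H2_conservation
    (α μ : ℝ)
    (u : ℝ → ℝ → ℝ) (hu : ContDiff ℝ (⊤ : ℕ∞) (Function.uncurry u))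
    (hne : ∀ t x : ℝ, u t x ≠ 0)
    (heq : ∀ t x : ℝ,
      pt (mf u) t x
        + (α * px u t x / (u t x)^3) * mf u t x
        + px (fun t' x' => (α / (u t' x')^2) * mf u t' x') t x = 0) :
    (∀ t x : ℝ,
      pt (fun t' x' => (u t' x')^2 + (px u t' x')^2) t x
        + px (fun t' x' =>
            2 * α * mf u t' x' / u t' x' - 2 * u t' x' * pt (px u) t' x') t x = 0)
    ∧
    (∀ t x : ℝ,
      pt (fun t' x' =>
          (px (px u) t' x')^2 + μ * (px u t' x')^2 + (μ - 1) * (u t' x')^2) t x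
        + px (fun t' x' =>
            2 * (1 - μ) * u t' x' * pt (px u) t' x'
              - 2 * px u t' x' * pt u t' x'
              + α * ((mf u t' x')^2 + 2 * (μ - 2) * u t' x' * mf u t' x'
                  - (μ - 2) * (u t' x')^2) / (u t' x')^2) t x = 0)
    ∧
    (∀ t x : ℝ,
      pt (fun t' x' => (mf u t' x')^2) t x
        + px (fun t' x' => α * (mf u t' x')^2 / (u t' x')^2) t x = 0) := by
  have laws (t x : ℝ) := H1_and_weighted_H2_conservation_general α μ
    (contDiff_infty.1 hu 3).contDiffAt (hne t x) (heq t x)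
  exact ⟨fun t x => (laws t x).1.pt_add_px_eq_zero, fun t x => (laws t x).2.1.pt_add_px_eq_zero,
    fun t x => (laws t x).2.2.pt_add_px_eq_zero⟩

end
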